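/- Assume the SOSC holds with respect to J, and fix ε₀ > 0. Then the logarithmically averaged Minkowski content Λ := lim_{δ→0⁺} (1/ln(1/δ)) ∫_δ^{ε₀} ε^{D−d} λ_d(F(ε)) ε^{−1} dε exists and is finite, and the rescaled volume measures localize: for every bounded continuous f : ℝ^d → ℝ, lim_{δ→0⁺} (1/ln(1/δ)) ∫_δ^{ε₀} ε^{D−d} (∫_{F(ε)} f dλ_d) ε^{−1} dε = Λ · ∫_F f dμ_F. In other words, the measures (1/ln(1/δ)) ∫_δ^{ε₀} ε^{D−d} λ_d(F(ε) ∩ ·) ε^{−1} dε converge weakly, as δ → 0, to Λ · μ_F, a constant multiple of the normalized D-dimensional Hausdorff measure on F. -/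

import Mathlib

open MeasureTheory Metric Filter Set
open scoped ENNReal Topology

/-!
In the variable `t = log (1 / ε)` the logarithmic averages are means over `[0, T]`, and a similarity
with ratio `q` translates the rescaled volume by `log (1 / q)` and multiplies it by `q ^ D`. Hence
self-similarity and subadditivity of the volume give the renewal inequality
`u t ≤ ∑ i, p i * u (t - a i)` with `∑ i, p i = 1` for the rescaled volume `u` of `F`. It says that
the weighted window integrals `∑ i, p i * ∫ t in (T - a i)..T, u t` decrease with `T`, so they
converge, and their mean is `∑ i, p i * a i` times that of `u`. This yields `Λ`.

Under the strong open set condition, disjoint copies of a small open set near a point of `F` can be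
packed around `F`: this shows `Λ > 0` and bounds the pieces of size `ρ` that meet a ball of radius
`ρ`. A cover of `F` by balls thus becomes a cover by similar copies of `F`, for which comparing
means gives `1 ≤ ∑ k, q k ^ D`; therefore `F` has positive Hausdorff measure.

Finally, cut `F` into pieces so small that `f` is almost constant near each of them. A piece with
ratio `q` contributes `q ^ D * Λ` to the mean and has `μ_F`-measure `q ^ D`. As these contributions
already add up to `Λ`, the overlaps of the parallel sets of the pieces have mean zero.
-/

/-! ### Means of functions on the half-line -/

/-- `u` is locally integrable and its averages `T⁻¹ ∫₀ᵀ u` converge to `L` as `T → ∞`. -/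
structure HasMean (u : ℝ → ℝ) (L : ℝ) : Prop where
  intervalIntegrable : ∀ a b, IntervalIntegrable u volume a b
  tendsto : Tendsto (fun T => T⁻¹ * ∫ t in (0 : ℝ)..T, u t) atTop (𝓝 L)

namespace HasMean

variable {u v w : ℝ → ℝ} {L M c : ℝ}

lemma const (c : ℝ) : HasMean (fun _ => c) c where
  intervalIntegrable _ _ := intervalIntegrable_const
  tendsto := by
    refine tendsto_const_nhds.congr' ?_
    filter_upwards [eventually_ne_atTop 0] with T hT
    simp [hT]

lemma const_mul (hu : HasMean u L) (c : ℝ) : HasMean (fun t => c * u t) (c * L) where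
  intervalIntegrable a b := (hu.intervalIntegrable a b).const_mul c
  tendsto := by
    simpa only [intervalIntegral.integral_const_mul, mul_left_comm] using hu.tendsto.const_mul c

lemma add (hu : HasMean u L) (hv : HasMean v M) : HasMean (fun t => u t + v t) (L + M) where
  intervalIntegrable a b := (hu.intervalIntegrable a b).add (hv.intervalIntegrable a b)
  tendsto := by
    refine (hu.tendsto.add hv.tendsto).congr fun T => ?_
    rw [intervalIntegral.integral_add (hu.intervalIntegrable 0 T) (hv.intervalIntegrable 0 T),
      mul_add]

lemma sum {ι : Type*} (s : Finset ι) {u : ι → ℝ → ℝ} {L : ι → ℝ}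
    (h : ∀ i ∈ s, HasMean (u i) (L i)) : HasMean (fun t => ∑ i ∈ s, u i t) (∑ i ∈ s, L i) := by
  classical
  induction s using Finset.induction_on with
  | empty => simpa using const 0
  | insert i s hi ih =>
    simpa only [Finset.sum_insert hi] using (h i (s.mem_insert_self i)).add
      (ih fun j hj => h j (Finset.mem_insert_of_mem hj))

lemma comp_sub_right (hu : HasMean u L) (a : ℝ) : HasMean (fun t => u (t - a)) L where
  intervalIntegrable x y := by
    simpa using (hu.intervalIntegrable (x - a) (y - a)).comp_sub_right a
  tendsto := by
    have hinv : Tendsto (fun T : ℝ => T⁻¹) atTop (𝓝 0) := tendsto_inv_atTop_zero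
    have hshift : Tendsto (fun T => T - a) atTop atTop :=
      tendsto_atTop_add_const_right _ _ tendsto_id
    have hlim := (hinv.mul_const (∫ t in -a..0, u t)).add
      ((tendsto_const_nhds (x := (1 : ℝ)).sub (hinv.mul_const a)).mul (hu.tendsto.comp hshift))
    simp only [zero_mul, sub_zero, one_mul, zero_add] at hlim
    refine hlim.congr' ?_
    filter_upwards [eventually_gt_atTop 0, eventually_gt_atTop a] with T hT hTa
    rw [intervalIntegral.integral_comp_sub_right u a, zero_sub,
      ← intervalIntegral.integral_add_adjacent_intervals (hu.intervalIntegrable (-a) 0)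
        (hu.intervalIntegrable 0 (T - a)), Function.comp_apply]
    field_simp [(sub_pos.2 hTa).ne']

lemma eventually_average_lt (hw : HasMean w L) (hu : ∀ a b, IntervalIntegrable u volume a b)
    (h : ∀ᶠ t in atTop, u t ≤ w t) (hc : L < c) :
    ∀ᶠ T in atTop, T⁻¹ * ∫ t in (0 : ℝ)..T, u t < c := by
  obtain ⟨t₀, ht₀⟩ := eventually_atTop.1 h
  have hlim := hw.tendsto.add (tendsto_inv_atTop_zero.mul_const
    ((∫ t in (0 : ℝ)..t₀, u t) - ∫ t in (0 : ℝ)..t₀, w t))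
  rw [zero_mul, add_zero] at hlim
  filter_upwards [hlim.eventually_lt_const hc, eventually_ge_atTop t₀, eventually_ge_atTop 0]
    with T hT hT₀ hT0
  refine lt_of_le_of_lt ?_ hT
  rw [← mul_add]
  have htail : ∫ t in t₀..T, u t ≤ ∫ t in t₀..T, w t :=
    intervalIntegral.integral_mono_on hT₀ (hu _ _) (hw.intervalIntegrable _ _)
      fun t ht => ht₀ t ht.1
  have hsplit_u := intervalIntegral.integral_add_adjacent_intervals (hu 0 t₀) (hu t₀ T)
  have hsplit_w := intervalIntegral.integral_add_adjacent_intervals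
    (hw.intervalIntegrable 0 t₀) (hw.intervalIntegrable t₀ T)
  gcongr
  linarith

lemma le_of_eventually_le (hu : HasMean u L) (hw : HasMean w M) (h : ∀ᶠ t in atTop, u t ≤ w t) :
    L ≤ M :=
  le_of_forall_gt_imp_ge_of_dense fun _ hc =>
    le_of_tendsto hu.tendsto <|
      (hw.eventually_average_lt hu.intervalIntegrable h hc).mono fun _ => le_of_lt

lemma of_forall_exists_eventually_le (hu : ∀ a b, IntervalIntegrable u volume a b)
    (hupper : ∀ c > M, ∃ w L, HasMean w L ∧ L < c ∧ ∀ᶠ t in atTop, u t ≤ w t)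
    (hlower : ∀ c > -M, ∃ w L, HasMean w L ∧ L < c ∧ ∀ᶠ t in atTop, -u t ≤ w t) :
    HasMean u M := by
  refine ⟨hu, tendsto_order.2 ⟨fun c hc => ?_, fun c hc => ?_⟩⟩
  · obtain ⟨w, L, hw, hLc, hle⟩ := hlower (-c) (neg_lt_neg hc)
    filter_upwards [hw.eventually_average_lt (fun a b => (hu a b).neg) hle hLc] with T hT
    simpa [intervalIntegral.integral_neg] using hT
  · obtain ⟨w, L, hw, hLc, hle⟩ := hupper c hc
    exact hw.eventually_average_lt hu hle hLc

lemma of_tendsto (hu : ∀ a b, IntervalIntegrable u volume a b) (h : Tendsto u atTop (𝓝 L)) :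
    HasMean u L := by
  refine of_forall_exists_eventually_le hu (fun c hc => ?_) (fun c hc => ?_)
  · obtain ⟨b, hLb, hbc⟩ := exists_between hc
    exact ⟨_, b, const b, hbc, h.eventually_le_const hLb⟩
  · obtain ⟨b, hLb, hbc⟩ := exists_between hc
    exact ⟨_, b, const b, hbc, h.neg.eventually_le_const hLb⟩

end HasMean

/-! ### The renewal inequality -/

section Renewal

variable {ι : Type*} [Fintype ι] {p a : ι → ℝ} {u : ℝ → ℝ}

/-- The weighted sum of the integrals of `u` over the windows `[T - aᵢ, T]`, with weights `pᵢ`.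
It is the quantity that the renewal inequality makes monotone in `T`. -/
noncomputable def windowIntegral (p a : ι → ℝ) (u : ℝ → ℝ) (T : ℝ) : ℝ :=
  ∑ i, p i * ∫ t in (T - a i)..T, u t

lemma antitone_windowIntegral (hp_sum : ∑ i, p i = 1)
    (hu : ∀ a b, IntervalIntegrable u volume a b)
    (hrenewal : ∀ t, u t ≤ ∑ i, p i * u (t - a i)) : Antitone (windowIntegral p a u) := by
  intro T T' hTT'
  have hshift (i : ι) : IntervalIntegrable (fun t => u (t - a i)) volume T T' := by
    simpa using (hu (T - a i) (T' - a i)).comp_sub_right (a i)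
  have hsum : IntervalIntegrable (fun t => ∑ i, p i * u (t - a i)) volume T T' := by
    simpa only [Finset.sum_fn] using
      IntervalIntegrable.sum Finset.univ fun i _ => (hshift i).const_mul (p i)
  have hint : ∫ t in T..T', u t ≤ ∑ i, p i * ∫ t in (T - a i)..(T' - a i), u t := by
    calc ∫ t in T..T', u t ≤ ∫ t in T..T', ∑ i, p i * u (t - a i) :=
          intervalIntegral.integral_mono_on hTT' (hu _ _)
            hsum fun t _ => hrenewal t
      _ = ∑ i, p i * ∫ t in (T - a i)..(T' - a i), u t := by
          rw [intervalIntegral.integral_finsetSum fun i _ => (hshift i).const_mul (p i)]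
          simp only [intervalIntegral.integral_const_mul,
            intervalIntegral.integral_comp_sub_right (fun t => u t)]
  have hwindow (i : ι) : ∫ t in (T' - a i)..T', u t =
      (∫ t in (T - a i)..T, u t) + (∫ t in T..T', u t) - ∫ t in (T - a i)..(T' - a i), u t := by
    rw [intervalIntegral.integral_add_adjacent_intervals (hu _ _) (hu _ _), eq_sub_iff_add_eq',
      intervalIntegral.integral_add_adjacent_intervals (hu _ _) (hu _ _)]
  have hdiff : windowIntegral p a u T' = windowIntegral p a u T +
      ((∫ t in T..T', u t) - ∑ i, p i * ∫ t in (T - a i)..(T' - a i), u t) := by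
    simp only [windowIntegral, hwindow, mul_sub, mul_add, Finset.sum_sub_distrib,
      Finset.sum_add_distrib, ← Finset.sum_mul, hp_sum, one_mul]
    ring
  linarith

lemma windowIntegral_nonneg (hp : ∀ i, 0 ≤ p i) (ha : ∀ i, 0 ≤ a i) (hu_nonneg : ∀ t, 0 ≤ u t)
    (T : ℝ) : 0 ≤ windowIntegral p a u T :=
  Finset.sum_nonneg fun i _ => mul_nonneg (hp i) <|
    intervalIntegral.integral_nonneg (by linarith [ha i]) fun t _ => hu_nonneg t

lemma abs_mul_sub_integral_le_of_monotone {U : ℝ → ℝ} (hU : Monotone U) {a : ℝ} (ha : 0 ≤ a)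
    (x : ℝ) : |a * U x - ∫ s in (x - a)..x, U s| ≤ a * (U x - U (x - a)) := by
  have hconst : a * U x - ∫ s in (x - a)..x, U s = ∫ s in (x - a)..x, (U x - U s) := by
    rw [intervalIntegral.integral_sub intervalIntegrable_const hU.intervalIntegrable]
    simp
  have hbound : ∀ s ∈ uIoc (x - a) x, ‖U x - U s‖ ≤ U x - U (x - a) := by
    intro s hs
    rw [uIoc_of_le (by linarith)] at hs
    rw [Real.norm_of_nonneg (sub_nonneg.2 (hU hs.2))]
    linarith [hU hs.1.le]
  rw [hconst, mul_comm]
  simpa [abs_of_nonneg ha] using intervalIntegral.norm_integral_le_of_norm_le_const hbound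

lemma abs_mul_integral_sub_integral_window_le {a : ℝ} (ha : 0 ≤ a)
    (hu : ∀ a b, IntervalIntegrable u volume a b) (hu_nonneg : ∀ t, 0 ≤ u t) (T : ℝ) :
    |a * (∫ t in (0 : ℝ)..T, u t) - ∫ s in (0 : ℝ)..T, ∫ t in (s - a)..s, u t| ≤
      a * (∫ t in (T - a)..T, u t) + a * ∫ t in -a..0, u t := by
  set U : ℝ → ℝ := fun s => ∫ t in (0 : ℝ)..s, u t
  have hU : Continuous U := intervalIntegral.continuous_primitive hu 0
  have hU_int (x y : ℝ) : IntervalIntegrable U volume x y := hU.intervalIntegrable x y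
  have hwindow (x y : ℝ) : ∫ t in x..y, u t = U y - U x :=
    (intervalIntegral.integral_interval_sub_left (hu 0 y) (hu 0 x)).symm
  have hmono : Monotone U := fun x y hxy => sub_nonneg.1 <| by
    rw [← hwindow]
    exact intervalIntegral.integral_nonneg hxy fun t _ => hu_nonneg t
  have hdouble : ∫ s in (0 : ℝ)..T, ∫ t in (s - a)..s, u t =
      (∫ s in (T - a)..T, U s) - ∫ s in -a..0, U s := by
    have hU_shift : IntervalIntegrable (fun s => U (s - a)) volume 0 T :=
      (hU.comp (continuous_sub_right a)).intervalIntegrable 0 T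
    simp only [hwindow]
    rw [intervalIntegral.integral_sub (hU_int _ _) hU_shift,
      intervalIntegral.integral_comp_sub_right U a, zero_sub]
    have hleft := intervalIntegral.integral_add_adjacent_intervals (hU_int (-a) 0) (hU_int 0 T)
    have hright := intervalIntegral.integral_add_adjacent_intervals (hU_int (-a) (T - a))
      (hU_int (T - a) T)
    linarith
  have hU0 : U 0 = 0 := intervalIntegral.integral_same
  have hend := abs_mul_sub_integral_le_of_monotone hmono ha T
  have hstart := abs_mul_sub_integral_le_of_monotone hmono ha 0
  rw [zero_sub, hU0, mul_zero, zero_sub, abs_neg] at hstart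
  calc |a * U T - ∫ s in (0 : ℝ)..T, ∫ t in (s - a)..s, u t|
      = |(a * U T - ∫ s in (T - a)..T, U s) + ∫ s in -a..0, U s| := by rw [hdouble]; ring_nf
    _ ≤ a * (U T - U (T - a)) + a * (0 - U (-a)) :=
        (abs_add_le _ _).trans (add_le_add hend hstart)
    _ = a * (∫ t in (T - a)..T, u t) + a * ∫ t in -a..0, u t := by
        rw [hwindow (T - a), hwindow (-a), hU0]

lemma abs_mul_integral_sub_integral_windowIntegral_le (hp : ∀ i, 0 ≤ p i)
    (ha : ∀ i, 0 ≤ a i) (hu : ∀ a b, IntervalIntegrable u volume a b) (hu_nonneg : ∀ t, 0 ≤ u t)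
    (hanti : Antitone (windowIntegral p a u)) {T : ℝ} (hT : 0 ≤ T) :
    |(∑ i, p i * a i) * (∫ t in (0 : ℝ)..T, u t) - ∫ s in (0 : ℝ)..T, windowIntegral p a u s| ≤
      ∑ i, a i * (2 * windowIntegral p a u 0) := by
  have hU : Continuous fun s => ∫ t in (0 : ℝ)..s, u t := intervalIntegral.continuous_primitive hu 0
  have hcont (i : ι) : Continuous fun s => ∫ t in (s - a i)..s, u t :=
    (hU.sub (hU.comp (continuous_sub_right (a i)))).congr fun s =>
      intervalIntegral.integral_interval_sub_left (hu 0 s) (hu 0 (s - a i))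
  have hterm (i : ι) {x : ℝ} (hx : 0 ≤ x) :
      p i * ∫ t in (x - a i)..x, u t ≤ windowIntegral p a u 0 :=
    (Finset.single_le_sum (f := fun i => p i * ∫ t in (x - a i)..x, u t)
      (fun j _ => mul_nonneg (hp j) <| intervalIntegral.integral_nonneg
        (by linarith [ha j]) fun t _ => hu_nonneg t) (Finset.mem_univ i)).trans (hanti hx)
  have hsum : (∑ i, p i * a i) * (∫ t in (0 : ℝ)..T, u t) -
      ∫ s in (0 : ℝ)..T, windowIntegral p a u s = ∑ i, p i * (a i * (∫ t in (0 : ℝ)..T, u t) -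
        ∫ s in (0 : ℝ)..T, ∫ t in (s - a i)..s, u t) := by
    simp only [windowIntegral]
    rw [intervalIntegral.integral_finsetSum fun i _ =>
      ((hcont i).intervalIntegrable _ _).const_mul (p i)]
    simp only [intervalIntegral.integral_const_mul, mul_sub, Finset.sum_sub_distrib,
      Finset.sum_mul, mul_assoc]
  rw [hsum]
  refine (Finset.abs_sum_le_sum_abs _ _).trans (Finset.sum_le_sum fun i _ => ?_)
  rw [abs_mul, abs_of_nonneg (hp i)]
  have hstart := hterm i le_rfl
  rw [zero_sub] at hstart
  calc p i * |a i * (∫ t in (0 : ℝ)..T, u t) - ∫ s in (0 : ℝ)..T, ∫ t in (s - a i)..s, u t|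
      ≤ p i * (a i * (∫ t in (T - a i)..T, u t) + a i * ∫ t in -a i..0, u t) := by
        gcongr
        · exact hp i
        · exact abs_mul_integral_sub_integral_window_le (ha i) hu hu_nonneg T
    _ = a i * (p i * (∫ t in (T - a i)..T, u t) + p i * ∫ t in -a i..0, u t) := by ring
    _ ≤ a i * (2 * windowIntegral p a u 0) := by
        gcongr
        · exact ha i
        · linarith [hterm i hT]

theorem exists_hasMean_of_le_sum_shift (hp : ∀ i, 0 < p i) (hp_sum : ∑ i, p i = 1)
    (ha : ∀ i, 0 < a i) (hu : ∀ a b, IntervalIntegrable u volume a b) (hu_nonneg : ∀ t, 0 ≤ u t)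
    (hrenewal : ∀ t, u t ≤ ∑ i, p i * u (t - a i)) : ∃ L, HasMean u L := by
  have hp_nonneg (i : ι) : 0 ≤ p i := (hp i).le
  have ha_nonneg (i : ι) : 0 ≤ a i := (ha i).le
  have hanti := antitone_windowIntegral hp_sum hu hrenewal
  have hbdd : BddBelow (range (windowIntegral p a u)) :=
    ⟨0, forall_mem_range.2 (windowIntegral_nonneg hp_nonneg ha_nonneg hu_nonneg)⟩
  have hwindow := HasMean.of_tendsto (fun _ _ => hanti.intervalIntegrable)
    (tendsto_atTop_ciInf hanti hbdd)
  obtain ⟨i⟩ : Nonempty ι := by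
    by_contra h
    simp [not_nonempty_iff.1 h] at hp_sum
  have hmean_pos : 0 < ∑ i, p i * a i :=
    Finset.sum_pos (fun i _ => mul_pos (hp i) (ha i)) ⟨i, Finset.mem_univ i⟩
  have hzero : Tendsto (fun T => T⁻¹ * ((∑ i, p i * a i) * (∫ t in (0 : ℝ)..T, u t) -
      ∫ s in (0 : ℝ)..T, windowIntegral p a u s)) atTop (𝓝 0) :=
    tendsto_inv_atTop_zero.zero_mul_isBoundedUnder_le <| isBoundedUnder_of_eventually_le <|
      (eventually_ge_atTop 0).mono fun _ =>
        abs_mul_integral_sub_integral_windowIntegral_le hp_nonneg ha_nonneg hu hu_nonneg hanti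
  have hlim := (hzero.add hwindow.tendsto).const_mul (∑ i, p i * a i)⁻¹
  refine ⟨_, hu, hlim.congr fun T => ?_⟩
  field_simp
  ring

end Renewal

/-! ### Similarities -/

/-- `T` multiplies all distances by the ratio `q > 0`. Unlike in `Dilation`, the map is unbundled
and its ratio is a real number. -/
structure IsSimilarity {X Y : Type*} [PseudoMetricSpace X] [PseudoMetricSpace Y] (T : X → Y)
    (q : ℝ) : Prop where
  pos : 0 < q
  dist_eq : ∀ x y, dist (T x) (T y) = q * dist x y

namespace IsSimilarity

section MetricSpace

variable {X Y Z : Type*} [MetricSpace X] [MetricSpace Y] [MetricSpace Z]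
  {T : X → Y} {T' : Y → Z} {q q' : ℝ}

lemma id : IsSimilarity (id : X → X) 1 := ⟨one_pos, fun _ _ => (one_mul _).symm⟩

lemma comp (h' : IsSimilarity T' q') (h : IsSimilarity T q) : IsSimilarity (T' ∘ T) (q' * q) :=
  ⟨mul_pos h'.pos h.pos, fun x y => by
    rw [Function.comp_apply, Function.comp_apply, h'.dist_eq, h.dist_eq, mul_assoc]⟩

lemma edist_eq (h : IsSimilarity T q) (x y : X) :
    edist (T x) (T y) = ENNReal.ofReal q * edist x y := by
  rw [edist_dist, edist_dist, h.dist_eq, ENNReal.ofReal_mul h.pos.le]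

lemma lipschitzWith (h : IsSimilarity T q) : LipschitzWith q.toNNReal T :=
  fun x y => (h.edist_eq x y).le

lemma antilipschitzWith (h : IsSimilarity T q) : AntilipschitzWith q⁻¹.toNNReal T :=
  AntilipschitzWith.of_le_mul_dist fun x y => by
    rw [h.dist_eq, Real.coe_toNNReal _ (inv_pos.2 h.pos).le, inv_mul_cancel_left₀ h.pos.ne']

lemma continuous (h : IsSimilarity T q) : Continuous T := h.lipschitzWith.continuous

lemma injective (h : IsSimilarity T q) : Function.Injective T := h.antilipschitzWith.injective

lemma isClosedEmbedding [CompleteSpace X] (h : IsSimilarity T q) :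
    Topology.IsClosedEmbedding T :=
  h.antilipschitzWith.isClosedEmbedding h.lipschitzWith.uniformContinuous

lemma infEDist_image (h : IsSimilarity T q) (x : X) (K : Set X) :
    infEDist (T x) (T '' K) = ENNReal.ofReal q * infEDist x K := by
  simp only [infEDist, iInf_image, h.edist_eq,
    ENNReal.mul_iInf_of_ne (ENNReal.ofReal_pos.2 h.pos).ne' ENNReal.ofReal_ne_top]

lemma cthickening_image (h : IsSimilarity T q) (hsurj : Function.Surjective T) (ε : ℝ)
    (K : Set X) : cthickening ε (T '' K) = T '' cthickening (ε / q) K := by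
  ext y
  obtain ⟨x, rfl⟩ := hsurj y
  rw [h.injective.mem_set_image, mem_cthickening_iff, mem_cthickening_iff, h.infEDist_image,
    ENNReal.ofReal_div_of_pos h.pos, ENNReal.le_div_iff_mul_le
      (.inl (ENNReal.ofReal_pos.2 h.pos).ne') (.inl ENNReal.ofReal_ne_top), mul_comm]

lemma hausdorffMeasure_image [MeasurableSpace X] [BorelSpace X] [MeasurableSpace Y] [BorelSpace Y]
    (h : IsSimilarity T q) {s : ℝ} (hs : 0 ≤ s) (A : Set X) :
    μH[s] (T '' A) = ENNReal.ofReal (q ^ s) * μH[s] A := by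
  refine le_antisymm ?_ ?_
  · rw [← ENNReal.ofReal_rpow_of_pos h.pos]
    exact h.lipschitzWith.hausdorffMeasure_image_le hs A
  · calc ENNReal.ofReal (q ^ s) * μH[s] A
        ≤ ENNReal.ofReal (q ^ s) * (ENNReal.ofReal (q⁻¹ ^ s) * μH[s] (T '' A)) := by
          gcongr
          rw [← ENNReal.ofReal_rpow_of_pos (inv_pos.2 h.pos)]
          exact h.antilipschitzWith.le_hausdorffMeasure_image hs A
      _ = μH[s] (T '' A) := by
          have hq := h.pos
          rw [← mul_assoc, ← ENNReal.ofReal_mul (by positivity),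
            ← Real.mul_rpow hq.le (by positivity), mul_inv_cancel₀ hq.ne', Real.one_rpow,
            ENNReal.ofReal_one, one_mul]

end MetricSpace

section FiniteDimensional

variable {E : Type*} [NormedAddCommGroup E] [NormedSpace ℝ E] [FiniteDimensional ℝ E]
  {T : E → E} {q : ℝ}

lemma addHaar_image [MeasurableSpace E] [BorelSpace E] (μ : Measure E) [μ.IsAddHaarMeasure]
    (h : IsSimilarity T q) (A : Set E) :
    μ (T '' A) = ENNReal.ofReal (q ^ Module.finrank ℝ E) * μ A := by
  rw [Measure.isAddLeftInvariant_eq_smul μ μH[Module.finrank ℝ E], Measure.smul_apply,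
    Measure.smul_apply, h.hausdorffMeasure_image (Nat.cast_nonneg _), Real.rpow_natCast,
    mul_smul_comm]

-- The image of a ball has the full measure of the ball that contains it, so the closed range of `T`
-- cannot miss an open set.
lemma surjective (h : IsSimilarity T q) : Function.Surjective T := by
  borelize E
  let μ : Measure E := Measure.addHaar
  by_contra hsurj
  obtain ⟨y, hy⟩ := not_forall.1 hsurj
  set R := (dist y (T 0) + 1) / q
  have hball : T '' ball 0 R ⊆ ball (T 0) (q * R) := by
    rintro _ ⟨x, hx, rfl⟩
    rw [mem_ball, h.dist_eq]
    exact mul_lt_mul_of_pos_left hx h.pos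
  have hmeas : MeasurableSet (T '' ball 0 R) :=
    h.isClosedEmbedding.measurableEmbedding.measurableSet_image.2 measurableSet_ball
  have hnull : μ (ball (T 0) (q * R) \ T '' ball 0 R) = 0 := by
    rw [measure_sdiff hball hmeas.nullMeasurableSet
      (measure_ball_lt_top.trans_le' (measure_mono hball)).ne, h.addHaar_image μ,
      Measure.addHaar_ball_mul_of_pos μ _ h.pos, tsub_self]
  have hopen : IsOpen (ball (T 0) (q * R) \ range T) :=
    isOpen_ball.sdiff h.isClosedEmbedding.isClosed_range
  have hempty := hopen.eq_empty_of_measure_zero <|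
    measure_mono_null (sdiff_subset_sdiff_right (image_subset_range T _)) hnull
  refine (eq_empty_iff_forall_notMem.1 hempty) y ⟨?_, hy⟩
  rw [mem_ball, mul_div_cancel₀ _ h.pos.ne']
  exact lt_add_one _

lemma isOpenMap (h : IsSimilarity T q) : IsOpenMap T :=
  (h.isClosedEmbedding.isEmbedding.toHomeomorphOfSurjective h.surjective).isOpenMap

end FiniteDimensional

end IsSimilarity

lemma cthickening_iUnion_of_finite {X ι : Type*} [PseudoEMetricSpace X] [Finite ι] (δ : ℝ)
    (A : ι → Set X) : cthickening δ (⋃ i, A i) = ⋃ i, cthickening δ (A i) := by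
  ext x
  simp only [mem_iUnion, mem_cthickening_iff, infEDist_iUnion]
  rcases isEmpty_or_nonempty ι with _ | _
  · simp [iInf_of_empty]
  · exact (Finite.exists_min fun i => infEDist x (A i)).elim fun i hi =>
      ⟨fun h => ⟨i, (le_iInf hi).trans h⟩, fun ⟨j, hj⟩ => (iInf_le _ j).trans hj⟩

universe u

/-! ### Self-similar sets and their refinements -/

/-- The finitely many similarities `T i` with ratios `q i` cover `F` by copies of itself, and `D` is
their similarity dimension. The ratios need not be less than one, so that the identity qualifies. -/
structure IsSelfSimilar {X ι : Type*} [MetricSpace X] [Fintype ι] (T : ι → X → X) (q : ι → ℝ)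
    (D : ℝ) (F : Set X) : Prop where
  isSimilarity : ∀ i, IsSimilarity (T i) (q i)
  iUnion_image : ⋃ i, T i '' F = F
  sum_rpow : ∑ i, q i ^ D = 1

/-- The open set condition for the maps `T i`, witnessed by the open set `O`. -/
structure OpenSetCondition {X ι : Type*} [TopologicalSpace X] (T : ι → X → X) (O : Set X) :
    Prop where
  isOpen : IsOpen O
  image_subset : ∀ i, T i '' O ⊆ O
  pairwise_disjoint : Pairwise (Function.onFun Disjoint fun i => T i '' O)

lemma OpenSetCondition.of_unique {X ι : Type*} [TopologicalSpace X] [Unique ι] {O : Set X}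
    (hO : IsOpen O) : OpenSetCondition (fun _ : ι => (id : X → X)) O :=
  ⟨hO, fun _ => (image_id O).subset, Subsingleton.pairwise⟩

lemma OpenSetCondition.interior {X ι : Type*} [TopologicalSpace X] {T : ι → X → X} {J : Set X}
    (hT : ∀ i, IsOpenMap (T i)) (hsub : ∀ i, T i '' J ⊆ J)
    (hdisj : ∀ i j, i ≠ j → Disjoint (T i '' interior J) (T j '' interior J)) :
    OpenSetCondition T (interior J) where
  isOpen := isOpen_interior
  image_subset i := interior_maximal ((image_mono interior_subset).trans (hsub i))
    (hT i _ isOpen_interior)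
  pairwise_disjoint := hdisj

lemma OpenSetCondition.sigma_comp {X ι : Type*} {κ : ι → Type*} [TopologicalSpace X] {S : ι → X → X}
    {T : ∀ i, κ i → X → X} {O : Set X} (hS : OpenSetCondition S O)
    (hinj : ∀ i, Function.Injective (S i)) (hT : ∀ i, OpenSetCondition (T i) O) :
    OpenSetCondition (fun p : Σ i, κ i => S p.1 ∘ T p.1 p.2) O := by
  have hsub (p : Σ i, κ i) : (S p.1 ∘ T p.1 p.2) '' O ⊆ S p.1 '' O := by
    rw [image_comp]
    exact image_mono ((hT p.1).image_subset p.2)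
  refine ⟨hS.isOpen, fun p => (hsub p).trans (hS.image_subset p.1), ?_⟩
  rintro ⟨i, k⟩ ⟨j, l⟩ hne
  rcases eq_or_ne i j with rfl | hij
  · have hkl : k ≠ l := fun h => hne (h ▸ rfl)
    simpa only [Function.onFun, image_comp, disjoint_image_iff (hinj i)]
      using (hT i).pairwise_disjoint hkl
  · exact (hS.pairwise_disjoint hij).mono (hsub ⟨i, k⟩) (hsub ⟨j, l⟩)

namespace IsSelfSimilar

variable {X : Type*} [MetricSpace X] {ι : Type u} [Fintype ι] {S : ι → X → X} {r : ι → ℝ} {D : ℝ}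
  {F : Set X}

lemma nonempty_index (h : IsSelfSimilar S r D F) : Nonempty ι := by
  by_contra hι
  simpa [not_nonempty_iff.1 hι] using h.sum_rpow

lemma image_subset (h : IsSelfSimilar S r D F) (i : ι) : S i '' F ⊆ F :=
  (subset_iUnion (fun i => S i '' F) i).trans h.iUnion_image.subset

lemma of_unique [Unique ι] : IsSelfSimilar (fun _ : ι => (id : X → X)) (fun _ => 1) D F :=
  ⟨fun _ => IsSimilarity.id, by simp only [image_id, iUnion_const], by simp⟩

lemma sigma_comp {κ : ι → Type*} [∀ i, Fintype (κ i)] {T : ∀ i, κ i → X → X} {q : ∀ i, κ i → ℝ}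
    (hS : IsSelfSimilar S r D F) (hT : ∀ i, IsSelfSimilar (T i) (q i) D F) :
    IsSelfSimilar (fun p : Σ i, κ i => S p.1 ∘ T p.1 p.2) (fun p => r p.1 * q p.1 p.2) D F where
  isSimilarity p := (hS.isSimilarity p.1).comp ((hT p.1).isSimilarity p.2)
  iUnion_image := by
    simp only [iUnion_sigma, image_comp, ← image_iUnion, (hT _).iUnion_image, hS.iUnion_image]
  sum_rpow := by
    simp only [Fintype.sum_sigma, Real.mul_rpow (hS.isSimilarity _).pos.le
      ((hT _).isSimilarity _).pos.le, ← Finset.mul_sum, (hT _).sum_rpow, mul_one, hS.sum_rpow]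

lemma exists_refinement_of_pow_le (h : IsSelfSimilar S r D F) {m M : ℝ} (hm : ∀ i, m ≤ r i)
    (hM : ∀ i, r i ≤ M) (n : ℕ) {ρ : ℝ} (hρ : 0 < ρ) (hmρ : m * ρ ≤ 1) (hn : M ^ n ≤ ρ) :
    ∃ (κ : Type u) (_ : Fintype κ) (T : κ → X → X) (q : κ → ℝ), IsSelfSimilar T q D F ∧
      (∀ O, OpenSetCondition S O → OpenSetCondition T O) ∧ ∀ k, q k ∈ Icc (m * ρ) ρ := by
  induction n generalizing ρ with
  | zero =>
    exact ⟨PUnit, inferInstance, _, _, of_unique, fun O hO => .of_unique hO.isOpen,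
      fun _ => ⟨hmρ, by simpa using hn⟩⟩
  | succ n ih =>
    rcases le_total 1 ρ with hρ1 | hρ1
    · exact ⟨PUnit, inferInstance, _, _, of_unique, fun O hO => .of_unique hO.isOpen,
        fun _ => ⟨hmρ, hρ1⟩⟩
    have hr (i : ι) : 0 < r i := (h.isSimilarity i).pos
    have hscale (i : ι) : m * (ρ / r i) ≤ 1 := by
      rw [mul_div_assoc', div_le_one (hr i)]
      exact (mul_le_mul_of_nonneg_right (hm i) hρ.le).trans (mul_le_of_le_one_right (hr i).le hρ1)
    have hpow (i : ι) : M ^ n ≤ ρ / r i := by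
      rw [le_div_iff₀ (hr i)]
      refine le_trans ?_ hn
      rw [pow_succ]
      exact mul_le_mul_of_nonneg_left (hM i) (pow_nonneg ((hr i).le.trans (hM i)) n)
    choose κ _ T q hT hOSC hq using fun i => ih (div_pos hρ (hr i)) (hscale i) (hpow i)
    refine ⟨Σ i, κ i, inferInstance, _, _, h.sigma_comp hT, fun O hO =>
      hO.sigma_comp (fun i => (h.isSimilarity i).injective) fun i => hOSC i O hO, fun p => ?_⟩
    have hcancel : r p.1 * (ρ / r p.1) = ρ := mul_div_cancel₀ ρ (hr p.1).ne'
    obtain ⟨hlower, hupper⟩ := hq p.1 p.2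
    constructor
    · calc m * ρ = r p.1 * (m * (ρ / r p.1)) := by rw [mul_left_comm, hcancel]
        _ ≤ r p.1 * q p.1 p.2 := mul_le_mul_of_nonneg_left hlower (hr p.1).le
    · exact (mul_le_mul_of_nonneg_left hupper (hr p.1).le).trans_eq hcancel

theorem exists_refinement (h : IsSelfSimilar S r D F) (hr : ∀ i, r i < 1) :
    ∃ m > 0, ∀ ρ ∈ Ioc (0 : ℝ) 1,
      ∃ (κ : Type u) (_ : Fintype κ) (T : κ → X → X) (q : κ → ℝ), IsSelfSimilar T q D F ∧
        (∀ O, OpenSetCondition S O → OpenSetCondition T O) ∧ ∀ k, q k ∈ Icc (m * ρ) ρ := by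
  have := h.nonempty_index
  obtain ⟨imin, hmin⟩ := Finite.exists_min r
  obtain ⟨imax, hmax⟩ := Finite.exists_max r
  have hpos := (h.isSimilarity imin).pos
  refine ⟨r imin, hpos, fun ρ hρ => ?_⟩
  obtain ⟨n, hn⟩ := exists_pow_lt_of_lt_one hρ.1 (hr imax)
  exact h.exists_refinement_of_pow_le hmin hmax n hρ.1
    (mul_le_one₀ (hr imin).le hρ.1.le hρ.2) hn.le

end IsSelfSimilar

/-! ### Rescaled volumes and integrals over parallel sets -/

section Rescaled

variable {E : Type*} [NormedAddCommGroup E] [NormedSpace ℝ E] [MeasurableSpace E]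

/-- The rescaled volume `ε ^ (D - d) * μ (K(ε))` of the `ε`-parallel set `K(ε)` of `K`, as a
function of `t = log (1 / ε)`. In this variable the logarithmic averages of the Minkowski content
are means in the sense of `HasMean`, and a similarity acts by a translation. -/
noncomputable def rescaledVolume (μ : Measure E) (D : ℝ) (K : Set E) (t : ℝ) : ℝ :=
  Real.exp (-t * (D - Module.finrank ℝ E)) * μ.real (cthickening (Real.exp (-t)) K)

/-- The integral of `f` against the rescaled volume measure on the parallel set of `K`, in the same
logarithmic variable as `rescaledVolume`. -/
noncomputable def rescaledIntegral (μ : Measure E) (D : ℝ) (K : Set E) (f : E → ℝ) (t : ℝ) : ℝ :=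
  Real.exp (-t * (D - Module.finrank ℝ E)) * ∫ x in cthickening (Real.exp (-t)) K, f x ∂μ

lemma rescaledVolume_nonneg (μ : Measure E) (D : ℝ) (K : Set E) (t : ℝ) :
    0 ≤ rescaledVolume μ D K t :=
  mul_nonneg (Real.exp_pos _).le measureReal_nonneg

lemma rescaledIntegral_one (μ : Measure E) (D : ℝ) (K : Set E) :
    rescaledIntegral μ D K 1 = rescaledVolume μ D K := by
  funext t
  simp [rescaledIntegral, rescaledVolume]

lemma rescaledIntegral_neg (μ : Measure E) (D : ℝ) (K : Set E) (f : E → ℝ) (t : ℝ) :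
    rescaledIntegral μ D K (-f) t = -rescaledIntegral μ D K f t := by
  simp [rescaledIntegral, integral_neg]

variable [FiniteDimensional ℝ E] {μ : Measure E} {K : Set E}

lemma antitone_setIntegral_cthickening_exp_neg (hK : IsCompact K) {f : E → ℝ}
    (hf : LocallyIntegrable f μ) (hf_nonneg : 0 ≤ f) :
    Antitone fun t : ℝ => ∫ x in cthickening (Real.exp (-t)) K, f x ∂μ := fun _ _ hst =>
  setIntegral_mono_set (hf.integrableOn_isCompact hK.cthickening) (ae_of_all _ hf_nonneg)
    (cthickening_mono (Real.exp_le_exp.2 (neg_le_neg hst)) K).eventuallyLE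

lemma intervalIntegrable_rescaledIntegral (D : ℝ) (hK : IsCompact K) {f : E → ℝ}
    (hf : LocallyIntegrable f μ) (a b : ℝ) :
    IntervalIntegrable (rescaledIntegral μ D K f) volume a b := by
  have hpos : LocallyIntegrable (fun x => max (f x) 0) μ := fun x =>
    (hf x).imp fun s hs => ⟨hs.1, hs.2.pos_part⟩
  have hneg : LocallyIntegrable (fun x => max (-f x) 0) μ := fun x =>
    (hf x).imp fun s hs => ⟨hs.1, hs.2.neg_part⟩
  have hsplit (t : ℝ) : ∫ x in cthickening (Real.exp (-t)) K, f x ∂μ =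
      (∫ x in cthickening (Real.exp (-t)) K, max (f x) 0 ∂μ) -
        ∫ x in cthickening (Real.exp (-t)) K, max (-f x) 0 ∂μ := by
    rw [← integral_sub (hpos.integrableOn_isCompact hK.cthickening)
      (hneg.integrableOn_isCompact hK.cthickening)]
    simp only [max_zero_sub_max_neg_zero_eq_self]
  unfold rescaledIntegral
  refine IntervalIntegrable.continuousOn_mul ?_ (by fun_prop)
  simp only [hsplit]
  exact (antitone_setIntegral_cthickening_exp_neg hK hpos
    fun _ => le_max_right _ _).intervalIntegrable.sub
    (antitone_setIntegral_cthickening_exp_neg hK hneg fun _ => le_max_right _ _).intervalIntegrable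

section LocallyFinite

variable [IsLocallyFiniteMeasure μ]

lemma intervalIntegrable_rescaledVolume (D : ℝ) (hK : IsCompact K) (a b : ℝ) :
    IntervalIntegrable (rescaledVolume μ D K) volume a b :=
  rescaledIntegral_one μ D K ▸
    intervalIntegrable_rescaledIntegral D hK (locallyIntegrable_const 1) a b

lemma rescaledVolume_le_sum {ι : Type*} [Fintype ι] (D : ℝ) {A : ι → Set E}
    (hA : ∀ i, IsCompact (A i)) (hKA : K ⊆ ⋃ i, A i) (t : ℝ) :
    rescaledVolume μ D K t ≤ ∑ i, rescaledVolume μ D (A i) t := by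
  simp only [rescaledVolume, ← Finset.mul_sum]
  gcongr
  have hsub := cthickening_subset_of_subset (Real.exp (-t)) hKA
  rw [cthickening_iUnion_of_finite] at hsub
  exact (measureReal_mono hsub (isCompact_iUnion fun i => (hA i).cthickening).measure_ne_top).trans
    (measureReal_iUnion_fintype_le _)

end LocallyFinite

variable [BorelSpace E] [μ.IsAddHaarMeasure]

lemma IsSimilarity.rescaledVolume_image {T : E → E} {q : ℝ} (h : IsSimilarity T q)
    (μ : Measure E) [μ.IsAddHaarMeasure] (D : ℝ) (K : Set E) (t : ℝ) :
    rescaledVolume μ D (T '' K) t = q ^ D * rescaledVolume μ D K (t + Real.log q) := by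
  have hradius : Real.exp (-t) / q = Real.exp (-(t + Real.log q)) := by
    rw [neg_add, ← sub_eq_add_neg, Real.exp_sub, Real.exp_log h.pos]
  have hfactor : Real.exp (-t * (D - Module.finrank ℝ E)) * q ^ Module.finrank ℝ E =
      q ^ D * Real.exp (-(t + Real.log q) * (D - Module.finrank ℝ E)) := by
    rw [← Real.rpow_natCast, Real.rpow_def_of_pos h.pos, Real.rpow_def_of_pos h.pos,
      ← Real.exp_add, ← Real.exp_add]
    ring_nf
  rw [rescaledVolume, rescaledVolume, h.cthickening_image h.surjective, hradius, measureReal_def,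
    h.addHaar_image μ, ENNReal.toReal_mul, ENNReal.toReal_ofReal (pow_nonneg h.pos.le _),
    ← mul_assoc, hfactor, mul_assoc, measureReal_def]

lemma HasMean.rescaledVolume_image {D L : ℝ} (hL : HasMean (rescaledVolume μ D K) L)
    {T : E → E} {q : ℝ} (h : IsSimilarity T q) :
    HasMean (rescaledVolume μ D (T '' K)) (q ^ D * L) := by
  rw [funext (h.rescaledVolume_image μ D K)]
  simpa only [sub_neg_eq_add] using (hL.comp_sub_right (-Real.log q)).const_mul (q ^ D)

lemma one_le_sum_rpow_of_subset_iUnion {ι : Type*} [Fintype ι] {D L : ℝ} (hK : IsCompact K)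
    (hL : HasMean (rescaledVolume μ D K) L) (hL_pos : 0 < L) {T : ι → E → E} {q : ι → ℝ}
    (h : ∀ i, IsSimilarity (T i) (q i)) (hcover : K ⊆ ⋃ i, T i '' K) : 1 ≤ ∑ i, q i ^ D := by
  have hle : L ≤ ∑ i, q i ^ D * L :=
    hL.le_of_eventually_le (HasMean.sum Finset.univ fun i _ => hL.rescaledVolume_image (h i)) <|
      Eventually.of_forall <| rescaledVolume_le_sum D (fun i => hK.image (h i).continuous) hcover
  rw [← Finset.sum_mul] at hle
  exact (le_mul_iff_one_le_left hL_pos).1 hle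

theorem IsSelfSimilar.exists_hasMean_rescaledVolume {ι : Type*} [Fintype ι] {S : ι → E → E}
    {r : ι → ℝ} {D : ℝ} (h : IsSelfSimilar S r D K) (hr : ∀ i, r i < 1) (hK : IsCompact K) :
    ∃ L, HasMean (rescaledVolume μ D K) L := by
  refine exists_hasMean_of_le_sum_shift (fun i => Real.rpow_pos_of_pos (h.isSimilarity i).pos D)
    h.sum_rpow (fun i => neg_pos.2 (Real.log_neg (h.isSimilarity i).pos (hr i)))
    (intervalIntegrable_rescaledVolume D hK) (rescaledVolume_nonneg μ D K) fun t => ?_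
  simpa only [sub_neg_eq_add, (h.isSimilarity _).rescaledVolume_image μ] using
    rescaledVolume_le_sum (μ := μ) D (fun i => hK.image (h.isSimilarity i).continuous)
      h.iUnion_image.superset t

end Rescaled

/-! ### Consequences of the strong open set condition -/

lemma IsSimilarity.image_ball_subset_ball {X Y : Type*} [MetricSpace X] [MetricSpace Y] {T : X → Y}
    {q ρ : ℝ} (h : IsSimilarity T q) (hq : q ≤ ρ) {F : Set X} (hF : Bornology.IsBounded F) {z : X}
    (hz : z ∈ F) {x : Y} (hmeet : (T '' F ∩ ball x ρ).Nonempty) :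
    T '' ball z 1 ⊆ ball x (ρ * (diam F + 2)) := by
  obtain ⟨_, ⟨w, hwF, rfl⟩, hwx⟩ := hmeet
  rintro _ ⟨y, hyz, rfl⟩
  have hyw : dist y w ≤ diam F + 1 :=
    (dist_triangle y z w).trans (by linarith [dist_le_diam_of_mem hF hz hwF, mem_ball.1 hyz])
  calc dist (T y) x ≤ dist (T y) (T w) + dist (T w) x := dist_triangle _ _ _
    _ < q * dist y w + ρ := by
      rw [h.dist_eq]
      gcongr
      exact hwx
    _ ≤ ρ * (diam F + 1) + ρ := by
      gcongr
      exact h.pos.le.trans hq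
    _ = ρ * (diam F + 2) := by ring

lemma measureReal_inter_ball_pos {X : Type*} [MetricSpace X] [ProperSpace X] [MeasurableSpace X]
    {μ : Measure X} [μ.IsOpenPosMeasure] [IsFiniteMeasureOnCompacts μ] {O : Set X} (hO : IsOpen O)
    {z : X} (hz : z ∈ O) {R : ℝ} (hR : 0 < R) : 0 < μ.real (O ∩ ball z R) :=
  ENNReal.toReal_pos ((hO.inter isOpen_ball).measure_pos μ ⟨z, hz, mem_ball_self hR⟩).ne'
    (measure_ne_top_of_subset inter_subset_right measure_ball_lt_top.ne)

section StrongOpenSetCondition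

variable {E : Type*} [NormedAddCommGroup E] [NormedSpace ℝ E] [FiniteDimensional ℝ E]
  [MeasurableSpace E] [BorelSpace E] {μ : Measure E} [μ.IsAddHaarMeasure] {D : ℝ} {F O : Set E}

namespace OpenSetCondition

variable {κ : Type*} {T : κ → E → E} {q : κ → ℝ} {U A : Set E}

lemma sum_pow_mul_measureReal_le (h : OpenSetCondition T O) (hT : ∀ k, IsSimilarity (T k) (q k))
    (hU : IsOpen U) (hUO : U ⊆ O) (hA : μ A ≠ ∞) {s : Finset κ} (hTA : ∀ k ∈ s, T k '' U ⊆ A) :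
    (∑ k ∈ s, q k ^ Module.finrank ℝ E) * μ.real U ≤ μ.real A := by
  have hdisj : (s : Set κ).PairwiseDisjoint fun k => T k '' U :=
    Pairwise.set_pairwise (h.pairwise_disjoint.mono fun _ _ hkl =>
      hkl.mono (image_mono hUO) (image_mono hUO)) _
  have hreal (k : κ) : μ.real (T k '' U) = q k ^ Module.finrank ℝ E * μ.real U := by
    rw [measureReal_def, (hT k).addHaar_image μ, ENNReal.toReal_mul,
      ENNReal.toReal_ofReal (pow_nonneg (hT k).pos.le _), measureReal_def]
  calc (∑ k ∈ s, q k ^ Module.finrank ℝ E) * μ.real U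
      = μ.real (⋃ k ∈ s, T k '' U) := by
        rw [measureReal_biUnion_finset hdisj
          (fun k _ => ((hT k).isOpenMap U hU).measurableSet)
          fun k hk => measure_ne_top_of_subset (hTA k hk) hA]
        simp only [hreal, Finset.sum_mul]
    _ ≤ μ.real A := measureReal_mono (iUnion₂_subset hTA) hA

lemma sum_rpow_mul_measureReal_le (h : OpenSetCondition T O) (hT : ∀ k, IsSimilarity (T k) (q k))
    (hD : 0 ≤ D) {a ρ : ℝ} (ha : 0 ≤ a) (hρ : 0 ≤ ρ) (hq : ∀ k, q k ∈ Icc a ρ) (hU : IsOpen U)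
    (hUO : U ⊆ O) (hA : μ A ≠ ∞) {s : Finset κ} (hTA : ∀ k ∈ s, T k '' U ⊆ A) :
    (∑ k ∈ s, q k ^ D) * (a ^ Module.finrank ℝ E * μ.real U) ≤ ρ ^ D * μ.real A := by
  have hterm (k : κ) : q k ^ D * a ^ Module.finrank ℝ E ≤ ρ ^ D * q k ^ Module.finrank ℝ E := by
    have hqk := (hT k).pos
    gcongr
    exacts [(hq k).2, (hq k).1]
  calc (∑ k ∈ s, q k ^ D) * (a ^ Module.finrank ℝ E * μ.real U)
      = (∑ k ∈ s, q k ^ D * a ^ Module.finrank ℝ E) * μ.real U := by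
        rw [← mul_assoc, Finset.sum_mul]
    _ ≤ (∑ k ∈ s, ρ ^ D * q k ^ Module.finrank ℝ E) * μ.real U := by
        gcongr ?_ * μ.real U
        exact Finset.sum_le_sum fun k _ => hterm k
    _ = ρ ^ D * ((∑ k ∈ s, q k ^ Module.finrank ℝ E) * μ.real U) := by
        rw [← Finset.mul_sum, mul_assoc]
    _ ≤ ρ ^ D * μ.real A := by
        gcongr
        exact h.sum_pow_mul_measureReal_le hT hU hUO hA hTA

end OpenSetCondition

namespace IsSelfSimilar

variable {ι : Type u} [Fintype ι] {S : ι → E → E} {r : ι → ℝ}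

lemma hasMean_rescaledVolume_pos (h : IsSelfSimilar S r D F) (hr : ∀ i, r i < 1) (hD : 0 ≤ D)
    (hF : IsCompact F) (hO : OpenSetCondition S O) (hFO : (F ∩ O).Nonempty) {L : ℝ}
    (hL : HasMean (rescaledVolume μ D F) L) : 0 < L := by
  obtain ⟨m, hm, hrefine⟩ := h.exists_refinement hr
  obtain ⟨z, hzF, hzO⟩ := hFO
  have hU : IsOpen (O ∩ ball z 1) := hO.isOpen.inter isOpen_ball
  have hU_pos := measureReal_inter_ball_pos (μ := μ) hO.isOpen hzO one_pos
  refine (mul_pos (pow_pos hm (Module.finrank ℝ E)) hU_pos).trans_le <|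
    (HasMean.const _).le_of_eventually_le hL ?_
  filter_upwards [eventually_ge_atTop 0] with t ht
  set ρ := Real.exp (-t) with hρ_def
  have hρ : 0 < ρ := Real.exp_pos _
  obtain ⟨κ, _, T, q, hT, hOT, hq⟩ := hrefine ρ ⟨hρ, Real.exp_le_one_iff.2 (neg_nonpos.2 ht)⟩
  have hsub (k : κ) : T k '' (O ∩ ball z 1) ⊆ cthickening ρ F := by
    rintro _ ⟨y, ⟨-, hy⟩, rfl⟩
    refine mem_cthickening_of_dist_le _ _ _ _ (hT.image_subset k (mem_image_of_mem _ hzF)) ?_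
    rw [(hT.isSimilarity k).dist_eq]
    exact (mul_le_of_le_one_right (hT.isSimilarity k).pos.le hy.le).trans (hq k).2
  have hpack := (hOT O hO).sum_rpow_mul_measureReal_le hT.isSimilarity hD
    (mul_pos hm hρ).le hρ.le hq hU inter_subset_left hF.cthickening.measure_ne_top (μ := μ)
    (s := Finset.univ) fun k _ => hsub k
  have hscale : Real.exp (-t * (D - Module.finrank ℝ E)) = ρ ^ D / ρ ^ Module.finrank ℝ E := by
    rw [Real.exp_mul, Real.rpow_sub hρ, Real.rpow_natCast]
  rw [rescaledVolume, hscale, ← hρ_def, div_mul_eq_mul_div, le_div_iff₀ (by positivity)]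
  rwa [hT.sum_rpow, one_mul, mul_pow, mul_right_comm] at hpack

lemma exists_cover_inter_ball (h : IsSelfSimilar S r D F) (hr : ∀ i, r i < 1) (hD : 0 ≤ D)
    (hF : Bornology.IsBounded F) (hO : OpenSetCondition S O) (hFO : (F ∩ O).Nonempty) :
    ∃ C, ∀ ρ ∈ Ioc (0 : ℝ) 1, ∀ x, ∃ (κ : Type u) (_ : Fintype κ) (T : κ → E → E) (q : κ → ℝ),
      (∀ k, IsSimilarity (T k) (q k)) ∧ F ∩ ball x ρ ⊆ ⋃ k, T k '' F ∧
        ∑ k, q k ^ D ≤ C * ρ ^ D := by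
  classical
  obtain ⟨m, hm, hrefine⟩ := h.exists_refinement hr
  obtain ⟨z, hzF, hzO⟩ := hFO
  have hU : IsOpen (O ∩ ball z 1) := hO.isOpen.inter isOpen_ball
  let μ : Measure E := Measure.addHaar
  have hU_pos := measureReal_inter_ball_pos (μ := μ) hO.isOpen hzO one_pos
  set d := Module.finrank ℝ E
  refine ⟨(diam F + 2) ^ d * μ.real (ball 0 1) / (m ^ d * μ.real (O ∩ ball z 1)),
    fun ρ hρ x => ?_⟩
  obtain ⟨κ, _, T, q, hT, hOT, hq⟩ := hrefine ρ hρ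
  let s : Finset κ := {k | (T k '' F ∩ ball x ρ).Nonempty}
  refine ⟨s, inferInstance, fun k => T k, fun k => q k, fun k => hT.isSimilarity k, ?_, ?_⟩
  · rintro y ⟨hyF, hyx⟩
    obtain ⟨k, hk⟩ := mem_iUnion.1 (hT.iUnion_image.superset hyF)
    exact mem_iUnion.2 ⟨⟨k, Finset.mem_filter.2 ⟨Finset.mem_univ k, y, hk, hyx⟩⟩, hk⟩
  have hsub : ∀ k ∈ s, T k '' (O ∩ ball z 1) ⊆ closedBall x (ρ * (diam F + 2)) := fun k hk =>
    (image_mono inter_subset_right).trans <| ((hT.isSimilarity k).image_ball_subset_ball (hq k).2 hF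
      hzF (Finset.mem_filter.1 hk).2).trans ball_subset_closedBall
  have hpack := (hOT O hO).sum_rpow_mul_measureReal_le hT.isSimilarity hD
    (mul_pos hm hρ.1).le hρ.1.le hq hU inter_subset_left measure_closedBall_lt_top.ne hsub (μ := μ)
  rw [Measure.addHaar_real_closedBall μ x (mul_nonneg hρ.1.le (by positivity)), mul_pow,
    mul_pow] at hpack
  rw [Finset.sum_coe_sort s fun k => q k ^ D, div_mul_eq_mul_div, le_div_iff₀ (by positivity)]
  refine le_of_mul_le_mul_left ?_ (pow_pos hρ.1 d)
  linarith

lemma exists_one_le_mul_sum_rpow_of_subset_iUnion_ball (h : IsSelfSimilar S r D F)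
    (hr : ∀ i, r i < 1) (hD : 0 ≤ D) (hF : IsCompact F) (hO : OpenSetCondition S O)
    (hFO : (F ∩ O).Nonempty) :
    ∃ C : ℝ, ∀ (s : Finset ℕ) (x : ℕ → E) (ρ : ℕ → ℝ), (∀ n, ρ n ∈ Ioc 0 1) →
      F ⊆ ⋃ n ∈ s, ball (x n) (ρ n) → 1 ≤ C * ∑ n ∈ s, ρ n ^ D := by
  obtain ⟨L, hL⟩ := h.exists_hasMean_rescaledVolume hr hF (μ := Measure.addHaar)
  have hL_pos := h.hasMean_rescaledVolume_pos hr hD hF hO hFO hL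
  obtain ⟨C, hC⟩ := h.exists_cover_inter_ball hr hD hF.isBounded hO hFO
  refine ⟨C, fun s x ρ hρ hcover => ?_⟩
  choose κ _ T q hT hball hsum using fun n : s => hC (ρ n) (hρ n) (x n)
  have hpieces : F ⊆ ⋃ p : Σ n, κ n, T p.1 p.2 '' F := by
    intro y hy
    obtain ⟨n, hn, hyn⟩ := mem_iUnion₂.1 (hcover hy)
    obtain ⟨k, hk⟩ := mem_iUnion.1 (hball ⟨n, hn⟩ ⟨hy, hyn⟩)
    exact mem_iUnion.2 ⟨⟨⟨n, hn⟩, k⟩, hk⟩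
  calc 1 ≤ ∑ p : Σ n, κ n, q p.1 p.2 ^ D :=
        one_le_sum_rpow_of_subset_iUnion hF hL hL_pos (fun p => hT p.1 p.2) hpieces
    _ ≤ ∑ n : s, C * ρ n ^ D := by
        rw [Fintype.sum_sigma]
        exact Finset.sum_le_sum fun n _ => hsum n
    _ = C * ∑ n ∈ s, ρ n ^ D := by
        rw [← Finset.mul_sum, Finset.sum_coe_sort s fun n => ρ n ^ D]

end IsSelfSimilar

end StrongOpenSetCondition

/-! ### Hausdorff measure of self-similar sets -/

section HausdorffMeasure

lemma exists_lt_nnreal_le_one_rpow_le {D : ℝ} (hD : 0 ≤ D) {e δ : ℝ≥0∞} (he : e < 1) (hδ : δ ≠ 0) :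
    ∃ ρ : NNReal, ρ ≤ 1 ∧ e < ρ ∧ (ρ : ℝ≥0∞) ^ D ≤ e ^ D + δ := by
  have hlt : e ^ D < e ^ D + δ :=
    ENNReal.lt_add_right (ENNReal.rpow_ne_top_of_nonneg hD he.ne_top) hδ
  have hrpow : ∀ᶠ x in 𝓝[>] e, x ^ D < e ^ D + δ :=
    (ENNReal.continuous_rpow_const.tendsto e).eventually_lt_const hlt |>.filter_mono
      nhdsWithin_le_nhds
  have : (𝓝[>] e).NeBot := nhdsGT_neBot_of_exists_gt ⟨1, he⟩
  obtain ⟨ρ, hρ, hρe, hρ1⟩ := (hrpow.and (Ioo_mem_nhdsGT he)).exists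
  lift ρ to NNReal using hρ1.ne_top
  exact ⟨ρ, by exact_mod_cast hρ1.le, hρe, hρ.le⟩

lemma IsSelfSimilar.sum_ediam_image_rpow_le {X ι : Type*} [MetricSpace X] [Fintype ι]
    {T : ι → X → X} {q : ι → ℝ} {D : ℝ} {F : Set X} (h : IsSelfSimilar T q D F) (hD : 0 ≤ D) :
    ∑ i, ediam (T i '' F) ^ D ≤ ediam F ^ D := by
  have hterm (i : ι) : ediam (T i '' F) ^ D ≤ ENNReal.ofReal (q i ^ D) * ediam F ^ D := by
    rw [← ENNReal.ofReal_rpow_of_pos (h.isSimilarity i).pos, ← ENNReal.mul_rpow_of_nonneg _ _ hD]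
    exact ENNReal.rpow_le_rpow ((h.isSimilarity i).lipschitzWith.ediam_image_le F) hD
  refine (Finset.sum_le_sum fun i _ => hterm i).trans_eq ?_
  rw [← Finset.sum_mul, ← ENNReal.ofReal_sum_of_nonneg fun i _ =>
    Real.rpow_nonneg (h.isSimilarity i).pos.le D, h.sum_rpow, ENNReal.ofReal_one, one_mul]

variable {X : Type*} [MetricSpace X] [MeasurableSpace X] [BorelSpace X] {D : ℝ} {F : Set X}

lemma exists_ball_cover_of_hausdorffMeasure_eq_zero [Nonempty X] (hD : 0 < D) (hF : μH[D] F = 0)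
    {c : ℝ≥0∞} (hc : c ≠ 0) :
    ∃ (x : ℕ → X) (ρ : ℕ → NNReal), (∀ n, ρ n ∈ Ioc 0 1) ∧ F ⊆ ⋃ n, ball (x n) (ρ n) ∧
      ∑' n, (ρ n : ℝ≥0∞) ^ D < c := by
  have hc2 : c / 2 ≠ 0 := ENNReal.div_ne_zero.2 ⟨hc, ENNReal.ofNat_ne_top⟩
  have hinf : ⨅ (t : ℕ → Set X) (_ : F ⊆ ⋃ n, t n) (_ : ∀ n, ediam (t n) ≤ 2⁻¹),
      ∑' n, ⨆ _ : (t n).Nonempty, ediam (t n) ^ D < c / 2 := by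
    refine lt_of_le_of_lt ?_ (pos_iff_ne_zero.2 hc2)
    rw [← hF, Measure.hausdorffMeasure_apply]
    exact le_iSup₂_of_le 2⁻¹ (by simp) le_rfl
  simp only [iInf_lt_iff] at hinf
  obtain ⟨t, htF, htd, hts⟩ := hinf
  obtain ⟨δ, hδ, hδs⟩ := ENNReal.exists_pos_sum_of_countable' hc2 ℕ
  choose ρ hρ1 hρ hρD using fun n => exists_lt_nnreal_le_one_rpow_le hD.le
    ((htd n).trans_lt ENNReal.one_half_lt_one) (hδ n).ne'
  have hcenter (n : ℕ) : ∃ x, t n ⊆ ball x (ρ n) := by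
    rcases (t n).eq_empty_or_nonempty with hempty | ⟨x, hx⟩
    · exact ⟨Classical.arbitrary X, hempty.subset.trans (empty_subset _)⟩
    · refine ⟨x, fun y hy => ?_⟩
      rw [← eball_coe, mem_eball]
      exact (edist_le_ediam_of_mem hy hx).trans_lt (hρ n)
  choose x hx using hcenter
  have hsup (n : ℕ) : ediam (t n) ^ D ≤ ⨆ _ : (t n).Nonempty, ediam (t n) ^ D := by
    rcases (t n).eq_empty_or_nonempty with hempty | hne
    · simp [hempty, hD]
    · exact le_iSup_of_le hne le_rfl
  refine ⟨x, ρ, fun n => ⟨by exact_mod_cast pos_of_gt (hρ n), hρ1 n⟩,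
    htF.trans (iUnion_mono hx), ?_⟩
  calc ∑' n, (ρ n : ℝ≥0∞) ^ D ≤ ∑' n, ((⨆ _ : (t n).Nonempty, ediam (t n) ^ D) + δ n) :=
        ENNReal.tsum_le_tsum fun n => (hρD n).trans (add_le_add_left (hsup n) _)
    _ < c / 2 + c / 2 := by
        rw [ENNReal.tsum_add]
        exact ENNReal.add_lt_add hts hδs
    _ = c := ENNReal.add_halves c

lemma hausdorffMeasure_ne_zero_of_one_le_mul_sum_rpow [Nonempty X] (hD : 0 < D) (hF : IsCompact F)
    {C : ℝ} (hC : ∀ (s : Finset ℕ) (x : ℕ → X) (ρ : ℕ → ℝ), (∀ n, ρ n ∈ Ioc 0 1) →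
      F ⊆ ⋃ n ∈ s, ball (x n) (ρ n) → 1 ≤ C * ∑ n ∈ s, ρ n ^ D) :
    μH[D] F ≠ 0 := by
  intro hzero
  have hc : 0 < (|C| + 1)⁻¹ := by positivity
  obtain ⟨x, ρ, hρ, hcover, hsum⟩ :=
    exists_ball_cover_of_hausdorffMeasure_eq_zero hD hzero (ENNReal.ofReal_pos.2 hc).ne'
  obtain ⟨s, hs⟩ := hF.elim_finite_subcover _ (fun n => isOpen_ball) hcover
  have hsum_real : ∑ n ∈ s, (ρ n : ℝ) ^ D < (|C| + 1)⁻¹ := by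
    rw [← ENNReal.ofReal_lt_ofReal_iff hc, ENNReal.ofReal_sum_of_nonneg fun n _ => by positivity]
    refine lt_of_le_of_lt ?_ ((ENNReal.sum_le_tsum s).trans_lt hsum)
    simp [← ENNReal.ofReal_rpow_of_nonneg, hD.le]
  have hlt : C * ∑ n ∈ s, (ρ n : ℝ) ^ D < 1 := by
    calc C * ∑ n ∈ s, (ρ n : ℝ) ^ D ≤ (|C| + 1) * ∑ n ∈ s, (ρ n : ℝ) ^ D := by
          gcongr
          linarith [le_abs_self C]
      _ < (|C| + 1) * (|C| + 1)⁻¹ := by gcongr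
      _ = 1 := mul_inv_cancel₀ (by positivity)
  exact hlt.not_ge (hC s x (fun n => ρ n) (fun n => by exact_mod_cast hρ n) hs)

namespace IsSelfSimilar

variable {ι : Type u} [Fintype ι]

lemma hausdorffMeasure_le_ediam_rpow {S : ι → X → X} {r : ι → ℝ} (h : IsSelfSimilar S r D F)
    (hr : ∀ i, r i < 1) (hD : 0 ≤ D) (hF : Bornology.IsBounded F) : μH[D] F ≤ ediam F ^ D := by
  obtain ⟨m, -, hrefine⟩ := h.exists_refinement hr
  choose κ _ T q hT _ hq using fun n : ℕ => hrefine (1 / ((n : ℝ) + 1))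
    ⟨Nat.one_div_pos_of_nat, by rw [div_le_one (by positivity)]; linarith [n.cast_nonneg (α := ℝ)]⟩
  have hlim : Tendsto (fun n : ℕ => ENNReal.ofReal (1 / ((n : ℝ) + 1)) * ediam F) atTop (𝓝 0) := by
    simpa using ENNReal.Tendsto.mul_const (b := ediam F)
      (ENNReal.tendsto_ofReal (tendsto_one_div_add_atTop_nhds_zero_nat (𝕜 := ℝ)))
      (.inr hF.ediam_ne_top)
  have hdiam (n : ℕ) (k : κ n) :
      ediam (T n k '' F) ≤ ENNReal.ofReal (1 / ((n : ℝ) + 1)) * ediam F :=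
    (((hT n).isSimilarity k).lipschitzWith.ediam_image_le F).trans <| by
      gcongr
      exact ENNReal.ofReal_le_ofReal (hq n k).2
  calc μH[D] F ≤ liminf (fun n => ∑ k, ediam (T n k '' F) ^ D) atTop :=
        Measure.hausdorffMeasure_le_liminf_sum D F _ hlim (fun n k => T n k '' F)
          (.of_forall hdiam) (.of_forall fun n => (hT n).iUnion_image.superset)
    _ ≤ liminf (fun _ : ℕ => ediam F ^ D) atTop :=
        liminf_le_liminf (.of_forall fun n => (hT n).sum_ediam_image_rpow_le hD)
    _ = ediam F ^ D := liminf_const _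

theorem hausdorffMeasure_ne_top {S : ι → X → X} {r : ι → ℝ} (h : IsSelfSimilar S r D F)
    (hr : ∀ i, r i < 1) (hD : 0 ≤ D) (hF : Bornology.IsBounded F) : μH[D] F ≠ ∞ :=
  ((h.hausdorffMeasure_le_ediam_rpow hr hD hF).trans_lt
    (ENNReal.rpow_lt_top_of_nonneg hD hF.ediam_ne_top)).ne

theorem hausdorffMeasure_ne_zero {E : Type*} [NormedAddCommGroup E] [NormedSpace ℝ E]
    [FiniteDimensional ℝ E] [MeasurableSpace E] [BorelSpace E] {S : ι → E → E} {r : ι → ℝ}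
    {F O : Set E} (h : IsSelfSimilar S r D F) (hr : ∀ i, r i < 1) (hD : 0 < D) (hF : IsCompact F)
    (hO : OpenSetCondition S O) (hFO : (F ∩ O).Nonempty) : μH[D] F ≠ 0 := by
  obtain ⟨C, hC⟩ := h.exists_one_le_mul_sum_rpow_of_subset_iUnion_ball hr hD.le hF hO hFO
  exact hausdorffMeasure_ne_zero_of_one_le_mul_sum_rpow hD hF hC

end IsSelfSimilar

end HausdorffMeasure

/-! ### Localization of the rescaled volume -/

section Localization

section SetIntegral

variable {α ι : Type*} [Fintype ι] {mα : MeasurableSpace α} {m : Measure α} {B : ι → Set α}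
  {f : α → ℝ}

lemma setIntegral_iUnion_le_sum (hB : ∀ i, MeasurableSet (B i))
    (hf : ∀ i, IntegrableOn f (B i) m) (hf_nonneg : ∀ i, ∀ x ∈ B i, 0 ≤ f x) :
    ∫ x in ⋃ i, B i, f x ∂m ≤ ∑ i, ∫ x in B i, f x ∂m := by
  rw [← integral_finsetSum_measure fun i _ => hf i, ← Measure.sum_fintype]
  refine integral_mono_measure Measure.restrict_iUnion_le (Measure.ae_sum_iff.2 fun i =>
    ae_restrict_of_forall_mem (hB i) (hf_nonneg i)) ?_
  rw [Measure.sum_fintype]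
  exact integrable_finsetSum_measure.2 fun i _ => hf i

lemma setIntegral_iUnion_le_sum_add (hB : ∀ i, MeasurableSet (B i)) (hB_fin : ∀ i, m (B i) ≠ ∞)
    (hf : ∀ i, IntegrableOn f (B i) m) {C : ℝ} (hC : ∀ i, ∀ x ∈ B i, -C ≤ f x) :
    ∫ x in ⋃ i, B i, f x ∂m ≤
      ∑ i, ∫ x in B i, f x ∂m + C * (∑ i, m.real (B i) - m.real (⋃ i, B i)) := by
  have hconst (s : Set α) (hs : m s ≠ ∞) : IntegrableOn (fun _ => C) s m := integrableOn_const hs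
  have hiUnion : m (⋃ i, B i) ≠ ∞ :=
    ((measure_iUnion_fintype_le m B).trans_lt
      (ENNReal.sum_lt_top.2 fun i _ => (hB_fin i).lt_top)).ne
  have hle := setIntegral_iUnion_le_sum hB (fun i => (hf i).add (hconst _ (hB_fin i)))
    fun i x hx => neg_le_iff_add_nonneg.1 (hC i x hx)
  simp only [Pi.add_apply] at hle
  rw [integral_add (integrableOn_finite_iUnion.2 hf) (hconst _ hiUnion),
    Finset.sum_congr rfl fun i _ => integral_add (hf i) (hconst _ (hB_fin i)),
    Finset.sum_add_distrib] at hle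
  simp only [setIntegral_const, smul_eq_mul, ← Finset.sum_mul] at hle
  linarith

lemma setIntegral_iUnion_le_sum_mul_add (hB : ∀ i, MeasurableSet (B i))
    (hB_fin : ∀ i, m (B i) ≠ ∞) (hf : ∀ i, IntegrableOn f (B i) m) {C : ℝ}
    (hC : ∀ i, ∀ x ∈ B i, -C ≤ f x) {c : ι → ℝ} (hc : ∀ i, ∀ x ∈ B i, f x ≤ c i) :
    ∫ x in ⋃ i, B i, f x ∂m ≤
      ∑ i, c i * m.real (B i) + C * (∑ i, m.real (B i) - m.real (⋃ i, B i)) := by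
  refine (setIntegral_iUnion_le_sum_add hB hB_fin hf hC).trans ?_
  gcongr with i
  simpa [mul_comm] using
    setIntegral_mono_on (hf i) (integrableOn_const (hB_fin i) (C := c i)) (hB i) (hc i)

end SetIntegral

lemma IsSimilarity.dist_le_of_mem_cthickening_image {X Y : Type*} [MetricSpace X] [MetricSpace Y]
    {T : X → Y} {q : ℝ} (h : IsSimilarity T q) {F : Set X} (hF : IsCompact F) {z : X} (hz : z ∈ F)
    {ε : ℝ} (hε : 0 ≤ ε) {x : Y} (hx : x ∈ cthickening ε (T '' F)) :
    dist x (T z) ≤ ε + q * diam F := by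
  rw [(hF.image h.continuous).cthickening_eq_biUnion_closedBall hε] at hx
  obtain ⟨_, ⟨y, hy, rfl⟩, hxy⟩ := mem_iUnion₂.1 hx
  calc dist x (T z) ≤ dist x (T y) + dist (T y) (T z) := dist_triangle _ _ _
    _ ≤ ε + q * diam F := by
      rw [h.dist_eq]
      exact add_le_add hxy
        (mul_le_mul_of_nonneg_left (dist_le_diam_of_mem hF.isBounded hy hz) h.pos.le)

namespace IsSelfSimilar

lemma exists_refinement_abs_sub_le {X : Type*} [MetricSpace X] {ι : Type u} [Fintype ι]
    {S : ι → X → X} {r : ι → ℝ} {D : ℝ} {F : Set X} (h : IsSelfSimilar S r D F)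
    (hr : ∀ i, r i < 1) (hF : IsCompact F) (hF_ne : F.Nonempty) {f : X → ℝ} (hf : Continuous f)
    {η : ℝ} (hη : 0 < η) :
    ∃ (κ : Type u) (_ : Fintype κ) (T : κ → X → X) (q : κ → ℝ), IsSelfSimilar T q D F ∧
      ∃ ε₁ > 0, ∃ c : κ → ℝ, ∀ k, ∀ x ∈ cthickening ε₁ (T k '' F), |f x - c k| ≤ η := by
  obtain ⟨z, hz⟩ := hF_ne
  obtain ⟨δ, hδ, hfδ⟩ := Metric.mem_uniformity_dist.1 <|
    hF.uniformContinuousAt_of_continuousAt f (fun x _ => hf.continuousAt) (dist_mem_uniformity hη)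
  obtain ⟨m, -, hrefine⟩ := h.exists_refinement hr
  obtain ⟨κ, _, T, q, hT, -, hq⟩ := hrefine (min 1 (δ / 2 / (diam F + 1)))
    ⟨by positivity, min_le_left _ _⟩
  refine ⟨κ, _, T, q, hT, δ / 4, by positivity, fun k => f (T k z), fun k x hx => ?_⟩
  have hqδ : q k * (diam F + 1) ≤ δ / 2 :=
    (le_div_iff₀ (by positivity)).1 ((hq k).2.trans (min_le_right _ _))
  have hdist := (hT.isSimilarity k).dist_le_of_mem_cthickening_image hF hz (by positivity) hx
  rw [← Real.dist_eq, dist_comm]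
  refine (hfδ ?_ (hT.image_subset k (mem_image_of_mem _ hz))).le
  rw [dist_comm]
  linarith [(hT.isSimilarity k).pos]

section HausdorffMeasure

variable {X κ : Type*} [MetricSpace X] [MeasurableSpace X] [BorelSpace X] [Fintype κ]
  {T : κ → X → X} {q : κ → ℝ} {D : ℝ} {F : Set X}

lemma cond_hausdorffMeasure_real_image (h : IsSelfSimilar T q D F) (hD : 0 ≤ D)
    (hF : MeasurableSet F) (hF_zero : μH[D] F ≠ 0) (hF_top : μH[D] F ≠ ∞) (k : κ) :
    (ProbabilityTheory.cond μH[D] F).real (T k '' F) = q k ^ D := by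
  rw [measureReal_def, ProbabilityTheory.cond_apply hF, inter_eq_right.2 (h.image_subset k),
    (h.isSimilarity k).hausdorffMeasure_image hD, mul_left_comm,
    ENNReal.inv_mul_cancel hF_zero hF_top, mul_one,
    ENNReal.toReal_ofReal (Real.rpow_nonneg (h.isSimilarity k).pos.le D)]

lemma sum_mul_rpow_le_integral_cond_add (h : IsSelfSimilar T q D F) (hD : 0 ≤ D) (hF : IsCompact F)
    (hF_zero : μH[D] F ≠ 0) (hF_top : μH[D] F ≠ ∞) {f : X → ℝ} (hf : Continuous f) {c : κ → ℝ}
    {η : ℝ} (hc : ∀ k, ∀ x ∈ T k '' F, c k ≤ f x + η) :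
    ∑ k, c k * q k ^ D ≤ ∫ x, f x ∂ProbabilityTheory.cond μH[D] F + η := by
  have := ProbabilityTheory.cond_isProbabilityMeasure_of_finite hF_zero hF_top
  obtain ⟨C, hC⟩ := hF.exists_bound_of_continuousOn hf.continuousOn
  have hrestrict :
      (ProbabilityTheory.cond μH[D] F).restrict F = ProbabilityTheory.cond μH[D] F := by
    rw [ProbabilityTheory.cond, Measure.restrict_smul, Measure.restrict_restrict hF.measurableSet,
      inter_self]
  have hreal : (ProbabilityTheory.cond μH[D] F).real F = 1 := by
    rw [measureReal_def, ProbabilityTheory.cond_apply_self hF_zero hF_top, ENNReal.toReal_one]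
  have hle := setIntegral_iUnion_le_sum_mul_add (m := ProbabilityTheory.cond μH[D] F)
    (f := fun x => -f x) (c := fun k => η - c k) (C := C)
    (fun k => (hF.image (h.isSimilarity k).continuous).measurableSet)
    (fun k => measure_ne_top _ _)
    (fun k => hf.neg.continuousOn.integrableOn_compact (hF.image (h.isSimilarity k).continuous))
    (fun k x hx => neg_le_neg (abs_le.1 (hC x (h.image_subset k hx))).2)
    (fun k x hx => by linarith [hc k x hx])
  simp only [h.cond_hausdorffMeasure_real_image hD hF.measurableSet hF_zero hF_top, sub_mul,
    Finset.sum_sub_distrib, ← Finset.mul_sum, h.sum_rpow, h.iUnion_image, hrestrict, integral_neg,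
    hreal] at hle
  linarith

end HausdorffMeasure

end IsSelfSimilar

section Rescaled

variable {E : Type*} [NormedAddCommGroup E] [NormedSpace ℝ E] [FiniteDimensional ℝ E]
  [MeasurableSpace E] [BorelSpace E] {μ : Measure E} {D : ℝ}

lemma rescaledIntegral_le_sum [IsLocallyFiniteMeasure μ] {ι : Type*} [Fintype ι] {A : ι → Set E}
    (hA : ∀ i, IsCompact (A i)) {f : E → ℝ} (hf : LocallyIntegrable f μ) {t C : ℝ}
    (hC : ∀ i, ∀ x ∈ cthickening (Real.exp (-t)) (A i), -C ≤ f x)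
    {c : ι → ℝ} (hc : ∀ i, ∀ x ∈ cthickening (Real.exp (-t)) (A i), f x ≤ c i) :
    rescaledIntegral μ D (⋃ i, A i) f t ≤ ∑ i, c i * rescaledVolume μ D (A i) t +
      C * (∑ i, rescaledVolume μ D (A i) t - rescaledVolume μ D (⋃ i, A i) t) := by
  simp only [rescaledIntegral, rescaledVolume, cthickening_iUnion_of_finite]
  set e := Real.exp (-t * (D - Module.finrank ℝ E)) with he
  have hbound := setIntegral_iUnion_le_sum_mul_add (m := μ)
    (fun i => isClosed_cthickening.measurableSet) (fun i => (hA i).cthickening.measure_ne_top)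
    (fun i => hf.integrableOn_isCompact (hA i).cthickening) hC hc
  refine (mul_le_mul_of_nonneg_left hbound (Real.exp_pos _).le).trans_eq ?_
  simp only [← he, mul_left_comm _ e, ← Finset.mul_sum]
  ring

namespace IsSelfSimilar

variable [μ.IsAddHaarMeasure] {F O : Set E} {f : E → ℝ} {L : ℝ}

lemma hasMean_sum_mul_rescaledVolume_add {κ : Type*} [Fintype κ] {T : κ → E → E} {q : κ → ℝ}
    (h : IsSelfSimilar T q D F) (hL : HasMean (rescaledVolume μ D F) L) (c : κ → ℝ) (C : ℝ) :
    HasMean (fun t => ∑ k, c k * rescaledVolume μ D (T k '' F) t +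
      C * (∑ k, rescaledVolume μ D (T k '' F) t - rescaledVolume μ D F t))
      (L * ∑ k, c k * q k ^ D) := by
  have hpiece (k : κ) := hL.rescaledVolume_image (h.isSimilarity k)
  convert (HasMean.sum Finset.univ fun k _ => (hpiece k).const_mul (c k)).add
    (((HasMean.sum Finset.univ fun k _ => hpiece k).add (hL.const_mul (-1))).const_mul C) using 1
  · simp only [neg_one_mul, sub_eq_add_neg]
  · rw [← Finset.sum_mul, h.sum_rpow, one_mul, neg_one_mul, add_neg_cancel, mul_zero, add_zero,
      Finset.mul_sum]
    exact Finset.sum_congr rfl fun k _ => by ring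

variable {ι : Type u} [Fintype ι] {S : ι → E → E} {r : ι → ℝ}

lemma exists_hasMean_rescaledIntegral_le (h : IsSelfSimilar S r D F) (hr : ∀ i, r i < 1)
    (hD : 0 < D) (hF : IsCompact F) (hO : OpenSetCondition S O) (hFO : (F ∩ O).Nonempty)
    (hL : HasMean (rescaledVolume μ D F) L) (hf : Continuous f) :
    ∀ b > L * ∫ x, f x ∂ProbabilityTheory.cond μH[D] F, ∃ w M, HasMean w M ∧ M < b ∧
      ∀ᶠ t in atTop, rescaledIntegral μ D F f t ≤ w t := by
  intro b hb
  have hL_pos := h.hasMean_rescaledVolume_pos hr hD.le hF hO hFO hL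
  obtain ⟨η, hη, hηb⟩ : ∃ η > 0, L * (∫ x, f x ∂ProbabilityTheory.cond μH[D] F + (η + η)) < b := by
    refine ⟨(b - L * ∫ x, f x ∂ProbabilityTheory.cond μH[D] F) / (4 * L),
      div_pos (sub_pos.2 hb) (by positivity), ?_⟩
    field_simp
    linarith
  obtain ⟨κ, _, T, q, hT, ε₁, hε₁, c, hc⟩ :=
    h.exists_refinement_abs_sub_le hr hF (hFO.mono inter_subset_left) hf hη
  obtain ⟨C, hC⟩ := (hF.cthickening (r := ε₁)).exists_bound_of_continuousOn hf.continuousOn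
  refine ⟨_, _, hT.hasMean_sum_mul_rescaledVolume_add hL (fun k => c k + η) C, ?_, ?_⟩
  · refine lt_of_le_of_lt ?_ hηb
    gcongr
    refine hT.sum_mul_rpow_le_integral_cond_add hD.le hF
      (h.hausdorffMeasure_ne_zero hr hD hF hO hFO)
      (h.hausdorffMeasure_ne_top hr hD.le hF.isBounded) hf fun k x hx => ?_
    linarith [(abs_le.1 (hc k x (self_subset_cthickening _ hx))).1]
  · have hsmall : ∀ᶠ t in atTop, Real.exp (-t) < ε₁ :=
      Real.tendsto_exp_neg_atTop_nhds_zero.eventually_lt_const hε₁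
    filter_upwards [hsmall] with t ht
    have hsub (k : κ) : cthickening (Real.exp (-t)) (T k '' F) ⊆ cthickening ε₁ (T k '' F) :=
      cthickening_mono ht.le _
    have hle := rescaledIntegral_le_sum (D := D) (fun k => hF.image (hT.isSimilarity k).continuous)
      (hf.locallyIntegrable (μ := μ)) (t := t) (C := C) (c := fun k => c k + η)
      (fun k x hx => (abs_le.1 (hC x
        (cthickening_subset_of_subset ε₁ (hT.image_subset k) (hsub k hx)))).1)
      (fun k x hx => by linarith [(abs_le.1 (hc k x (hsub k hx))).2])
    rwa [hT.iUnion_image] at hle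

theorem hasMean_rescaledIntegral (h : IsSelfSimilar S r D F) (hr : ∀ i, r i < 1) (hD : 0 < D)
    (hF : IsCompact F) (hO : OpenSetCondition S O) (hFO : (F ∩ O).Nonempty)
    (hL : HasMean (rescaledVolume μ D F) L) (hf : Continuous f) :
    HasMean (rescaledIntegral μ D F f) (L * ∫ x, f x ∂ProbabilityTheory.cond μH[D] F) := by
  refine HasMean.of_forall_exists_eventually_le
    (intervalIntegrable_rescaledIntegral D hF hf.locallyIntegrable)
    (h.exists_hasMean_rescaledIntegral_le hr hD hF hO hFO hL hf) ?_
  simpa only [Pi.neg_apply, integral_neg, mul_neg, rescaledIntegral_neg] using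
    h.exists_hasMean_rescaledIntegral_le hr hD hF hO hFO hL hf.neg

end IsSelfSimilar

end Rescaled

end Localization

/-! ### Logarithmic averages -/

lemma image_exp_neg_Ico {a b : ℝ} (ha : 0 < a) (hb : 0 < b) :
    (fun t => Real.exp (-t)) '' Ico (-Real.log b) (-Real.log a) = Ioc a b := by
  ext ε
  constructor
  · rintro ⟨t, ⟨hbt, hta⟩, rfl⟩
    exact ⟨(Real.log_lt_iff_lt_exp ha).1 (lt_neg_of_lt_neg hta),
      (Real.le_log_iff_exp_le hb).1 (neg_le_of_neg_le hbt)⟩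
  · rintro ⟨haε, hεb⟩
    have hε : 0 < ε := ha.trans haε
    refine ⟨-Real.log ε, ⟨neg_le_neg (Real.log_le_log hε hεb),
      neg_lt_neg (Real.log_lt_log ha haε)⟩, ?_⟩
    simp only [neg_neg, Real.exp_log hε]

lemma setIntegral_Ioc_mul_inv_eq_integral_exp_neg {a b : ℝ} (ha : 0 < a) (hab : a ≤ b)
    (g : ℝ → ℝ) :
    ∫ ε in Ioc a b, g ε * ε⁻¹ = ∫ t in -Real.log b..-Real.log a, g (Real.exp (-t)) := by
  have hderiv (t : ℝ) : HasDerivAt (fun t => Real.exp (-t)) (-Real.exp (-t)) t := by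
    simpa using (hasDerivAt_neg t).exp
  have hinj : Function.Injective fun t => Real.exp (-t) := Real.exp_injective.comp neg_injective
  rw [← image_exp_neg_Ico ha (ha.trans_le hab),
    integral_image_eq_integral_abs_deriv_smul measurableSet_Ico
      (fun t _ => (hderiv t).hasDerivWithinAt) hinj.injOn,
    intervalIntegral.integral_of_le (neg_le_neg (Real.log_le_log ha hab)),
    integral_Ico_eq_integral_Ioc]
  refine setIntegral_congr_fun measurableSet_Ioc fun t _ => ?_
  simp only [abs_neg, Real.abs_exp, smul_eq_mul]
  rw [mul_left_comm, mul_inv_cancel₀ (Real.exp_ne_zero _), mul_one]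

lemma HasMean.tendsto_log_average {g : ℝ → ℝ} {L : ℝ}
    (hg : HasMean (fun t => g (Real.exp (-t))) L) {ε₀ : ℝ} (hε₀ : 0 < ε₀) :
    Tendsto (fun δ => (Real.log δ⁻¹)⁻¹ * ∫ ε in Ioc δ ε₀, g ε * ε⁻¹) (𝓝[>] 0) (𝓝 L) := by
  have hlog : Tendsto (fun δ : ℝ => Real.log δ⁻¹) (𝓝[>] 0) atTop :=
    Real.tendsto_log_atTop.comp tendsto_inv_nhdsGT_zero
  have hlim := (tendsto_inv_atTop_zero.mul_const
    (∫ t in -Real.log ε₀..0, g (Real.exp (-t)))).add hg.tendsto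
  rw [zero_mul, zero_add] at hlim
  refine (hlim.comp hlog).congr' ?_
  filter_upwards [self_mem_nhdsWithin, Ioo_mem_nhdsGT hε₀] with δ hδ hδε₀
  rw [Function.comp_apply, ← mul_add, intervalIntegral.integral_add_adjacent_intervals
    (hg.intervalIntegrable _ _) (hg.intervalIntegrable _ _), Real.log_inv,
    setIntegral_Ioc_mul_inv_eq_integral_exp_neg hδ hδε₀.2.le]

lemma HasMean.tendsto_log_average_rpow_mul {W : ℝ → ℝ} {s L : ℝ}
    (hW : HasMean (fun t => Real.exp (-t * s) * W (Real.exp (-t))) L) {ε₀ : ℝ} (hε₀ : 0 < ε₀) :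
    Tendsto (fun δ => (Real.log δ⁻¹)⁻¹ * ∫ ε in Ioc δ ε₀, ε ^ s * W ε * ε⁻¹) (𝓝[>] 0) (𝓝 L) := by
  simp only [Real.exp_mul] at hW
  exact hW.tendsto_log_average (g := fun ε => ε ^ s * W ε) hε₀

theorem statement5_general {E ι : Type*} [NormedAddCommGroup E] [NormedSpace ℝ E]
    [FiniteDimensional ℝ E] [MeasurableSpace E] [BorelSpace E] (μ : Measure E) [μ.IsAddHaarMeasure]
    [Fintype ι] {S : ι → E → E} {r : ι → ℝ} {D : ℝ} {F O : Set E} (h : IsSelfSimilar S r D F)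
    (hr : ∀ i, r i < 1) (hD : 0 < D) (hF : IsCompact F) (hO : OpenSetCondition S O)
    (hFO : (F ∩ O).Nonempty) {ε₀ : ℝ} (hε₀ : 0 < ε₀) :
    ∃ Λ : ℝ, 0 < Λ ∧
      Tendsto (fun δ : ℝ => (Real.log δ⁻¹)⁻¹ * ∫ ε in Ioc δ ε₀,
          ε ^ (D - Module.finrank ℝ E) * μ.real (cthickening ε F) * ε⁻¹)
        (𝓝[>] 0) (𝓝 Λ) ∧
      ∀ f : E → ℝ, Continuous f →
        Tendsto (fun δ : ℝ => (Real.log δ⁻¹)⁻¹ * ∫ ε in Ioc δ ε₀,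
            ε ^ (D - Module.finrank ℝ E) * (∫ x in cthickening ε F, f x ∂μ) * ε⁻¹)
          (𝓝[>] 0) (𝓝 (Λ * ∫ x, f x ∂ProbabilityTheory.cond μH[D] F)) := by
  obtain ⟨Λ, hΛ⟩ := h.exists_hasMean_rescaledVolume hr hF (μ := μ)
  exact ⟨Λ, h.hasMean_rescaledVolume_pos hr hD.le hF hO hFO hΛ,
    hΛ.tendsto_log_average_rpow_mul hε₀, fun f hf =>
      (h.hasMean_rescaledIntegral hr hD hF hO hFO hΛ hf).tendsto_log_average_rpow_mul hε₀⟩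

/-- (Localization of the average Minkowski content.) Under the SOSC
with respect to `J` and for any `ε₀ > 0`, the logarithmically averaged Minkowski
content `Λ = lim_{δ→0⁺} (1/ln(1/δ)) ∫_δ^{ε₀} ε^{D-d} λ_d(F(ε)) ε⁻¹ dε` exists and is
finite, and for every bounded continuous `f : ℝ^d → ℝ` the logarithmic averages of
`ε^{D-d} ∫_{F(ε)} f dλ_d` converge to `Λ · ∫_F f dμ_F`; i.e. the rescaled volume
measures converge weakly to `Λ · μ_F` with `μ_F = H^D(F ∩ ·)/H^D(F)`. -/
theorem statement5 (d N : ℕ) (hd : 1 ≤ d) (hN : 2 ≤ N)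
    (S : Fin N → EuclideanSpace ℝ (Fin d) → EuclideanSpace ℝ (Fin d))
    (r : Fin N → ℝ) (hr : ∀ i, r i ∈ Set.Ioo (0 : ℝ) 1)
    (hS : ∀ i x y, dist (S i x) (S i y) = r i * dist x y)
    (F : Set (EuclideanSpace ℝ (Fin d)))
    (hF_ne : F.Nonempty) (hF_cpt : IsCompact F)
    (hF_self : F = ⋃ i, S i '' F)
    (D : ℝ) (hD : 0 < D) (hD_dim : ∑ i, r i ^ D = 1)
    (J : Set (EuclideanSpace ℝ (Fin d))) (hJ_cpt : IsCompact J)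
    (hJ_reg : J = closure (interior J))
    (hJ_sub : ∀ i, S i '' J ⊆ J)
    (hJ_disj : ∀ i j, i ≠ j → Disjoint (S i '' interior J) (S j '' interior J))
    (hSOSC : (F ∩ interior J).Nonempty)
    (ε₀ : ℝ) (hε₀ : 0 < ε₀) :
    ∃ Λ : ℝ,
      Tendsto (fun δ : ℝ => (Real.log δ⁻¹)⁻¹ *
          ∫ ε in Set.Ioc δ ε₀,
            ε ^ (D - d) * (volume (Metric.cthickening ε F)).toReal * ε⁻¹)
        (𝓝[>] 0) (𝓝 Λ)
      ∧ ∀ f : EuclideanSpace ℝ (Fin d) → ℝ, Continuous f →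
          (∃ C : ℝ, ∀ x, |f x| ≤ C) →
          Tendsto (fun δ : ℝ => (Real.log δ⁻¹)⁻¹ *
              ∫ ε in Set.Ioc δ ε₀,
                ε ^ (D - d) * (∫ x in Metric.cthickening ε F, f x) * ε⁻¹)
            (𝓝[>] 0)
            (𝓝 (Λ * ∫ x, f x
              ∂((μH[D] F)⁻¹ •
                (μH[D] : Measure (EuclideanSpace ℝ (Fin d))).restrict F))) := by
  have hsim (i : Fin N) : IsSimilarity (S i) (r i) := ⟨(hr i).1, hS i⟩
  obtain ⟨Λ, -, hvolume, hintegral⟩ := statement5_general volume ⟨hsim, hF_self.symm, hD_dim⟩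
    (fun i => (hr i).2) hD hF_cpt
    (.interior (fun i => (hsim i).isOpenMap) hJ_sub hJ_disj) hSOSC hε₀
  rw [finrank_euclideanSpace_fin] at hvolume hintegral
  exact ⟨Λ, hvolume, fun f hf _ => hintegral f hf⟩
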